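/- arXiv:2407.12596 — 2 statements merged into one kernel-verified Lean document; each statement's English description precedes it below -/
import Mathlib

section
/- Let p be a prime, r ∈ ℕ_{≥1}, R = ℤ/p^rℤ with maximal ideal I = pR, let n ≥ 2 be even, and let z, z′ ∈ R be units. If ν_p(z − (−1)^{n/2}) = ν_p(z′ − (−1)^{n/2}), then |σ_{z,n}| = |σ_{z′,n}|. -/
open Matrix

/-- `η(a)` is the matrix `![![a, -1], ![1, 0]]`. -/
def eta {R : Type*} [CommRing R] (a : R) : Matrix (Fin 2) (Fin 2) R := !![a, -1; 1, 0]

/-- `[c₁, …, cₙ] = η(c₁)·η(c₂)⋯η(cₙ)`. -/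
def prodEta {R : Type*} [CommRing R] {n : ℕ} (c : Fin n → R) : Matrix (Fin 2) (Fin 2) R :=
  (List.ofFn fun i => eta (c i)).prod


open scoped Classical in
/-- `ν_p(a)`: the largest `k ∈ {0, …, r}` with `a ≡ 0 (mod p^k)`; in particular `ν_p(0) = r`. -/
noncomputable def nuP (p r : ℕ) (a : ZMod (p ^ r)) : ℕ :=
  Nat.findGreatest (fun k => (p : ZMod (p ^ r)) ^ k ∣ a) r

/-!
Let `I` lie in the Jacobson radical and let `M` have determinant one and off-diagonal entries in
`I`, so that `M 1 1` is a unit. Splitting off the first two factors `η(a) η(b)` turns the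
factorizations of `M` of length `n + 2` into those of length `n` of a matrix of the same kind, whose
lower right entry is `b * (a * M 1 1 - M 0 1) - M 1 1`. Since `a ↦ a * M 1 1 - M 0 1` permutes `I`,
for a second such matrix `M'` and any unit `u` there is a permutation `a ↦ a'` of `I` with
`a' * M' 1 1 - M' 0 1 = u * (a * M 1 1 - M 0 1)`. If multiplication by `u` also takes
`M 1 1 - (-1) ^ (k + 1)` to `M' 1 1 - (-1) ^ (k + 1)`, then, keeping `b` fixed, it takes the
new lower right entries minus `(-1) ^ k` to each other, and induction applies; for length two, a
factorization exists, and is then unique, exactly when the lower right entry is `-1`.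
-/

lemma exists_perm_smul_sub_eq_smul {G A : Type*} [Group G] [AddGroup A] [MulAction G A]
    (u v v' : G) (w w' : A) :
    ∃ f : Equiv.Perm A, ∀ a, v' • f a - w' = u • (v • a - w) := by
  let affine (v : G) (w : A) : Equiv.Perm A := (MulAction.toPerm v).trans (Equiv.subRight w)
  exact ⟨((affine v w).trans (MulAction.toPerm u)).trans (affine v' w').symm,
    fun a => (affine v' w').apply_symm_apply (u • (v • a - w))⟩

section Eta

variable {R : Type*} [CommRing R]

lemma prodEta_succ {n : ℕ} (c : Fin (n + 1) → R) :
    prodEta c = eta (c 0) * prodEta (Fin.tail c) := by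
  simp [prodEta, List.ofFn_succ, Fin.tail]

lemma prodEta_two (c : Fin 2 → R) : prodEta c = !![c 0 * c 1 - 1, -c 0; c 1, -1] := by
  simp [prodEta, eta, sub_eq_add_neg]

lemma det_eta (a : R) : (eta a).det = 1 := by
  simp [eta]

lemma prodEta_eq_iff_tail {n : ℕ} {c : Fin (n + 1) → R} {M : Matrix (Fin 2) (Fin 2) R} :
    prodEta c = M ↔ prodEta (Fin.tail c) = (eta (c 0))⁻¹ * M := by
  have isUnit_det_eta : IsUnit (eta (c 0)).det := by simp [det_eta]
  rw [prodEta_succ]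
  constructor
  · rintro rfl
    rw [nonsing_inv_mul_cancel_left _ _ isUnit_det_eta]
  · intro h
    rw [h, mul_nonsing_inv_cancel_left _ _ isUnit_det_eta]

lemma inv_eta_mul (a : R) (M : Matrix (Fin 2) (Fin 2) R) :
    (eta a)⁻¹ * M = !![M 1 0, M 1 1; a * M 1 0 - M 0 0, a * M 1 1 - M 0 1] := by
  have inv_eta : (eta a)⁻¹ = !![0, 1; -1, a] := by
    rw [inv_def, det_eta, Ring.inverse_one, one_smul, eta, adjugate_fin_two_of, neg_neg]
  rw [inv_eta]
  nth_rw 1 [eta_fin_two M]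
  simp [sub_eq_neg_add]

end Eta

/-- Matrices of determinant one that are diagonal modulo `I`: the class of matrices preserved by
splitting off two factors `eta a` with `a ∈ I`, containing all `diag(z, z⁻¹)`. -/
structure IsSpecialDiagMod {R : Type*} [CommRing R] (I : Ideal R) (M : Matrix (Fin 2) (Fin 2) R) :
    Prop where
  det_eq_one : M.det = 1
  zero_one_mem : M 0 1 ∈ I
  one_zero_mem : M 1 0 ∈ I

namespace IsSpecialDiagMod

variable {R : Type*} [CommRing R] {I : Ideal R} {M : Matrix (Fin 2) (Fin 2) R}

lemma of_isUnit (I : Ideal R) {z : R} (hz : IsUnit z) :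
    IsSpecialDiagMod I !![z, 0; 0, Ring.inverse z] where
  det_eq_one := by simp [Ring.mul_inverse_cancel z hz]
  zero_one_mem := I.zero_mem
  one_zero_mem := I.zero_mem

lemma isUnit_one_one (hI : I ≤ Ideal.jacobson ⊥) (hM : IsSpecialDiagMod I M) :
    IsUnit (M 1 1) := by
  have det_expansion : M 0 0 * M 1 1 - 1 = M 0 1 * M 1 0 := by
    linear_combination hM.det_eq_one - det_fin_two M
  have isUnit_diag_prod : IsUnit (M 0 0 * M 1 1) :=
    Ideal.isUnit_of_sub_one_mem_jacobson_bot _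
      (det_expansion ▸ hI (I.mul_mem_right _ hM.zero_one_mem))
  exact isUnit_of_mul_isUnit_right isUnit_diag_prod

lemma inv_eta_mul_inv_eta_mul (hM : IsSpecialDiagMod I M) {a b : R} (ha : a ∈ I) (hb : b ∈ I) :
    IsSpecialDiagMod I ((eta b)⁻¹ * ((eta a)⁻¹ * M)) where
  det_eq_one := by simp [det_nonsing_inv, det_eta, hM.det_eq_one]
  zero_one_mem := by
    simpa [inv_eta_mul] using I.sub_mem (I.mul_mem_right _ ha) hM.zero_one_mem
  one_zero_mem := by
    simpa [inv_eta_mul] using I.sub_mem (I.mul_mem_right _ hb) hM.one_zero_mem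

lemma exists_perm_ideal (hI : I ≤ Ideal.jacobson ⊥) {M' : Matrix (Fin 2) (Fin 2) R}
    (hM : IsSpecialDiagMod I M) (hM' : IsSpecialDiagMod I M') (u : Rˣ) :
    ∃ f : Equiv.Perm I, ∀ a : I, f a * M' 1 1 - M' 0 1 = u * (a * M 1 1 - M 0 1) := by
  obtain ⟨v, hv⟩ := hM.isUnit_one_one hI
  obtain ⟨v', hv'⟩ := hM'.isUnit_one_one hI
  obtain ⟨f, hf⟩ := exists_perm_smul_sub_eq_smul u v v' ⟨M 0 1, hM.zero_one_mem⟩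
    (⟨M' 0 1, hM'.zero_one_mem⟩ : I)
  refine ⟨f, fun a => ?_⟩
  simpa [Units.smul_def, hv, hv', mul_comm] using congrArg (Subtype.val : I → R) (hf a)

end IsSpecialDiagMod

/-- The tuples `(c₁, …, cₙ) ∈ Iⁿ` with `[c₁, …, cₙ] = M`; for `M = diag(z, z⁻¹)` this is the set
`σ_{z,n}`. -/
abbrev EtaFactorization {R : Type*} [CommRing R] (I : Ideal R) (n : ℕ)
    (M : Matrix (Fin 2) (Fin 2) R) : Type _ :=
  {c : Fin n → R // (∀ i, c i ∈ I) ∧ prodEta c = M}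

namespace EtaFactorization

variable {R : Type*} [CommRing R] {I : Ideal R}

/-- Splitting off the first factor. -/
def succEquiv (I : Ideal R) (n : ℕ) (M : Matrix (Fin 2) (Fin 2) R) :
    EtaFactorization I (n + 1) M ≃ Σ a : I, EtaFactorization I n ((eta (a : R))⁻¹ * M) where
  toFun c := ⟨⟨c.1 0, c.2.1 0⟩, Fin.tail c.1, fun i => c.2.1 i.succ, prodEta_eq_iff_tail.1 c.2.2⟩
  invFun x := ⟨Fin.cons x.1 x.2.1, Fin.cases x.1.2 x.2.2.1, prodEta_eq_iff_tail.2 x.2.2.2⟩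
  left_inv c := Subtype.ext (Fin.cons_self_tail c.1)
  right_inv _ := rfl

/-- Splitting off the first two factors. -/
noncomputable def succSuccEquiv (I : Ideal R) (n : ℕ) (M : Matrix (Fin 2) (Fin 2) R) :
    EtaFactorization I (n + 2) M ≃
      Σ a b : I, EtaFactorization I n ((eta (b : R))⁻¹ * ((eta (a : R))⁻¹ * M)) :=
  (succEquiv I (n + 1) M).trans (Equiv.sigmaCongrRight fun _ => succEquiv I n _)

instance subsingleton_two (M : Matrix (Fin 2) (Fin 2) R) :
    Subsingleton (EtaFactorization I 2 M) where
  allEq c d := by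
    have same_prod := c.2.2.trans d.2.2.symm
    simp only [prodEta_two, EmbeddingLike.apply_eq_iff_eq, vecCons_inj, neg_inj] at same_prod
    ext i
    fin_cases i
    · exact same_prod.1.2.1
    · exact same_prod.2.1.1

lemma nonempty_two_iff {M : Matrix (Fin 2) (Fin 2) R} (hM : IsSpecialDiagMod I M) :
    Nonempty (EtaFactorization I 2 M) ↔ M 1 1 = -1 := by
  constructor
  · rintro ⟨c, -, rfl⟩
    simp [prodEta_two]
  · intro h
    refine ⟨![-M 0 1, M 1 0], ?_, ?_⟩
    · exact Fin.forall_fin_two.2 ⟨I.neg_mem hM.zero_one_mem, hM.one_zero_mem⟩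
    · have det_expansion := hM.det_eq_one
      rw [det_fin_two, h] at det_expansion
      have upper_left : -M 0 1 * M 1 0 - 1 = M 0 0 := by linear_combination det_expansion
      rw [eta_fin_two M, prodEta_two, h, ← upper_left]
      simp

lemma nonempty_equiv_two {M M' : Matrix (Fin 2) (Fin 2) R} (hM : IsSpecialDiagMod I M)
    (hM' : IsSpecialDiagMod I M') (h : M 1 1 = -1 ↔ M' 1 1 = -1) :
    Nonempty (EtaFactorization I 2 M ≃ EtaFactorization I 2 M') := by
  have nonempty_iff := (nonempty_two_iff hM).trans (h.trans (nonempty_two_iff hM').symm)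
  exact ⟨equivOfSubsingletonOfSubsingleton (fun c => (nonempty_iff.1 ⟨c⟩).some)
    fun c => (nonempty_iff.2 ⟨c⟩).some⟩

theorem nonempty_equiv_of_associated (hI : I ≤ Ideal.jacobson ⊥) (k : ℕ)
    {M M' : Matrix (Fin 2) (Fin 2) R} (hM : IsSpecialDiagMod I M) (hM' : IsSpecialDiagMod I M')
    (h : Associated (M 1 1 - (-1) ^ (k + 1)) (M' 1 1 - (-1) ^ (k + 1))) :
    Nonempty (EtaFactorization I (2 * (k + 1)) M ≃ EtaFactorization I (2 * (k + 1)) M') := by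
  induction k generalizing M M' with
  | zero =>
    have lower_right_iff : M 1 1 = -1 ↔ M' 1 1 = -1 := by
      simpa [add_eq_zero_iff_eq_neg] using h.eq_zero_iff
    exact nonempty_equiv_two hM hM' lower_right_iff
  | succ k ih =>
    obtain ⟨u, hu⟩ := h
    obtain ⟨f, hf⟩ := hM.exists_perm_ideal hI hM' u
    have tail_equiv (a b : I) : Nonempty
        (EtaFactorization I (2 * (k + 1)) ((eta (b : R))⁻¹ * ((eta (a : R))⁻¹ * M)) ≃
          EtaFactorization I (2 * (k + 1)) ((eta (b : R))⁻¹ * ((eta (f a : R))⁻¹ * M'))) := by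
      refine ih (hM.inv_eta_mul_inv_eta_mul a.2 b.2)
        (hM'.inv_eta_mul_inv_eta_mul (f a).2 b.2) ⟨u, ?_⟩
      simp only [inv_eta_mul, of_apply, cons_val', cons_val_one, cons_val_zero, cons_val_fin_one]
      linear_combination -hu - (b : R) * hf a
    exact ⟨(succSuccEquiv I _ M).trans <|
      (Equiv.sigmaCongr f fun a => Equiv.sigmaCongrRight fun b => (tail_equiv a b).some).trans
        (succSuccEquiv I _ M').symm⟩

end EtaFactorization

section Diagonal

variable {R : Type*} [CommRing R] {I : Ideal R}

lemma associated_sub_inverse_sub {z e : R} (hz : IsUnit z) (he : e * e = 1) :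
    Associated (z - e) (Ring.inverse z - e) := by
  obtain ⟨u, hu⟩ := (IsUnit.of_mul_eq_one e he).neg.mul hz.ringInverse
  refine ⟨u, ?_⟩
  rw [hu]
  linear_combination (-e) * Ring.mul_inverse_cancel z hz + Ring.inverse z * he

theorem stmt10_general (hI : I ≤ Ideal.jacobson ⊥) {n : ℕ} (hn : 2 ≤ n) (hne : Even n) {z z' : R}
    (hz : IsUnit z) (hz' : IsUnit z')
    (h : Associated (z - (-1) ^ (n / 2)) (z' - (-1) ^ (n / 2))) :
    Nonempty (EtaFactorization I n !![z, 0; 0, Ring.inverse z] ≃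
      EtaFactorization I n !![z', 0; 0, Ring.inverse z']) := by
  obtain ⟨k, rfl⟩ : ∃ k, n = 2 * (k + 1) := by
    obtain ⟨m, rfl⟩ := hne
    exact ⟨m - 1, by lia⟩
  rw [Nat.mul_div_cancel_left _ two_pos] at h
  have sign_mul_self : (-1 : R) ^ (k + 1) * (-1) ^ (k + 1) = 1 := by simp [← mul_pow]
  exact EtaFactorization.nonempty_equiv_of_associated hI k (.of_isUnit I hz) (.of_isUnit I hz') <|
    (associated_sub_inverse_sub hz sign_mul_self).symm.trans <|
      h.trans (associated_sub_inverse_sub hz' sign_mul_self)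

end Diagonal

section ZModPrimePow

variable {p r : ℕ}

lemma zmod_natCast_pow_eq_zero : (p : ZMod (p ^ r)) ^ r = 0 := by
  exact_mod_cast ZMod.natCast_self (p ^ r)

lemma span_natCast_le_jacobson_bot :
    Ideal.span {(p : ZMod (p ^ r))} ≤ Ideal.jacobson ⊥ := by
  rw [Ideal.span_singleton_le_iff_mem]
  exact Ideal.radical_le_jacobson ⟨r, zmod_natCast_pow_eq_zero⟩

lemma isUnit_of_not_natCast_dvd (hp : p.Prime) {t : ZMod (p ^ r)}
    (ht : ¬(p : ZMod (p ^ r)) ∣ t) : IsUnit t := by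
  have : NeZero (p ^ r) := ⟨pow_ne_zero r hp.ne_zero⟩
  obtain ⟨m, rfl⟩ := ZMod.natCast_zmod_surjective (n := p ^ r) t
  rw [ZMod.isUnit_iff_coprime]
  exact ((hp.coprime_iff_not_dvd.2 fun h => ht (Nat.cast_dvd_cast h)).symm).pow_right r

lemma nuP_le (a : ZMod (p ^ r)) : nuP p r a ≤ r := by
  classical
  exact Nat.findGreatest_le r

lemma pow_nuP_dvd (a : ZMod (p ^ r)) : (p : ZMod (p ^ r)) ^ nuP p r a ∣ a := by
  classical
  exact Nat.findGreatest_spec (P := fun k => (p : ZMod (p ^ r)) ^ k ∣ a) r.zero_le (by simp)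

lemma not_pow_nuP_succ_dvd {a : ZMod (p ^ r)} (h : nuP p r a < r) :
    ¬(p : ZMod (p ^ r)) ^ (nuP p r a + 1) ∣ a := by
  classical
  exact Nat.findGreatest_is_greatest (P := fun k => (p : ZMod (p ^ r)) ^ k ∣ a)
    (Nat.lt_succ_self _) h

lemma associated_pow_nuP (hp : p.Prime) (a : ZMod (p ^ r)) :
    Associated ((p : ZMod (p ^ r)) ^ nuP p r a) a := by
  obtain ⟨t, ht⟩ := pow_nuP_dvd a
  rcases (nuP_le a).eq_or_lt with nuP_eq | nuP_lt
  · rw [nuP_eq, zmod_natCast_pow_eq_zero, zero_mul] at ht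
    rw [nuP_eq, zmod_natCast_pow_eq_zero, ht]
  · have not_dvd : ¬(p : ZMod (p ^ r)) ∣ t := fun h =>
      not_pow_nuP_succ_dvd nuP_lt (by
        rw [pow_succ]
        exact (mul_dvd_mul_left _ h).trans ht.symm.dvd)
    exact ⟨(isUnit_of_not_natCast_dvd hp not_dvd).unit, ht.symm⟩

lemma associated_of_nuP_eq (hp : p.Prime) {a b : ZMod (p ^ r)} (h : nuP p r a = nuP p r b) :
    Associated a b :=
  (associated_pow_nuP hp a).symm.trans (h ▸ associated_pow_nuP hp b)

end ZModPrimePow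

/-- For `R = ℤ/p^rℤ` with `I = pR`, even `n ≥ 2`, and units `z, z'`:
if `ν_p(z - (-1)^(n/2)) = ν_p(z' - (-1)^(n/2))` then `|σ_{z,n}| = |σ_{z',n}|`. -/
theorem stmt10 (p r : ℕ) (hp : p.Prime) (hr : 1 ≤ r) (n : ℕ) (hn : 2 ≤ n) (hne : Even n)
    (z z' : ZMod (p ^ r)) (hz : IsUnit z) (hz' : IsUnit z')
    (h : nuP p r (z - (-1) ^ (n / 2)) = nuP p r (z' - (-1) ^ (n / 2))) :
    Nat.card {c : Fin n → ZMod (p ^ r) //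
        (∀ i, c i ∈ Ideal.span {(p : ZMod (p ^ r))}) ∧
        prodEta c = !![z, 0; 0, Ring.inverse z]} =
      Nat.card {c : Fin n → ZMod (p ^ r) //
        (∀ i, c i ∈ Ideal.span {(p : ZMod (p ^ r))}) ∧
        prodEta c = !![z', 0; 0, Ring.inverse z']} := by
  obtain ⟨e⟩ := stmt10_general span_natCast_le_jacobson_bot hn hne hz hz'
    (associated_of_nuP_eq hp h)
  exact Nat.card_congr e
end

section
/- Let p be a prime, r ∈ ℕ_{≥2}, R = ℤ/p^rℤ with maximal ideal I = pR, and let n ≥ 4 be even. For ℓ ∈ {1, …, r−1}: σ_n(ℓ) = Σ_{j=1}^{ℓ−1} n_j·σ_{n−2}(j)·μ(j) + Σ_{j=ℓ+1}^{r} n_j·σ_{n−2}(j)·μ(ℓ) + σ_{n−2}(ℓ)·( μ(ℓ)·(p−2)·p^{r−ℓ−1} + Σ_{j=ℓ+1}^{r} n_j·μ(j) ). Moreover σ_n(r) = Σ_{j=1}^{r} n_j·σ_{n−2}(j)·μ(j). -/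
open Matrix

/-- `σ_n(ℓ) := |σ_{(-1)^(n/2)+p^ℓ, n}|`: the number of tuples `(c₁, …, cₙ) ∈ Iⁿ`
(`I = pR ⊆ R = ℤ/p^rℤ`) with `[c₁, …, cₙ] = diag(z, z⁻¹)` for `z = (-1)^(n/2) + p^ℓ`. -/
noncomputable def sigmaCount (p r n ℓ : ℕ) : ℕ :=
  Nat.card {c : Fin n → ZMod (p ^ r) //
    (∀ i, c i ∈ Ideal.span {(p : ZMod (p ^ r))}) ∧
    prodEta c = !![(-1) ^ (n / 2) + (p : ZMod (p ^ r)) ^ ℓ, 0;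
                   0, Ring.inverse ((-1) ^ (n / 2) + (p : ZMod (p ^ r)) ^ ℓ)]}

/-- `μ(j)`. -/
def muF (p r j : ℕ) : ℕ :=
  if j = r then (r - 1) * p ^ r - (r - 2) * p ^ (r - 1) else (p ^ r - p ^ (r - 1)) * (j - 1)

/-- `n_j`. -/
def nF (p r j : ℕ) : ℕ := if j = r then 1 else p ^ (r - j) - p ^ (r - j - 1)

/-!
When `b * c - 1` is a unit `w`, the four letters `η(a)η(b)η(c)η(d)` equal
`η(a - w⁻¹c) · diag(w, w⁻¹) · η(d - w⁻¹b)`, and a diagonal matrix can be pushed to the end of a word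
at the cost of permuting the letters within `I`. Summing over `a` and `d` therefore shortens words
by two letters. In terms of the offset `y` of `z` from `(-1)^(n/2)`, this reads
`|σ_n(y)| = ∑_{b, c ∈ I} |σ_{n-2}(bc - y)|`.

By induction on `n` the count at `y` does not change when `y` is multiplied by a unit, so in a chain
ring it depends only on the valuation of `y`. Since `μ(j)` is the number of factorizations `x = bc`
with `b, c ∈ I` of an element `x` of valuation `j`, and `n_j` is the number of such elements, the
recursion is the convolution `∑_x μ(v x) |σ_{n-2}(x - y)|` sorted by the valuations of `x` and
`x - y`.
-/

section EtaWalks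

variable {R : Type*} [CommRing R]

/-- The diagonal matrix `diag(u, u⁻¹)`, as a monoid homomorphism in `u`. -/
def unitDiag : Rˣ →* Matrix (Fin 2) (Fin 2) R where
  toFun u := !![(u : R), 0; 0, (↑u⁻¹ : R)]
  map_one' := by simp [Matrix.one_fin_two]
  map_mul' u v := by simp [mul_comm]

theorem unitDiag_mul_eta (u : Rˣ) (a : R) :
    unitDiag u * eta a = eta ((u ^ 2 : Rˣ) * a) * unitDiag u⁻¹ := by
  ext i j
  fin_cases i <;> fin_cases j <;> simp [unitDiag, eta, sq, mul_right_comm]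

theorem eta_mul_eta_mul_eta_mul_eta (a b c d : R) (w : Rˣ) (hw : (w : R) = b * c - 1) :
    eta a * eta b * eta c * eta d =
      eta (a - (w⁻¹ : Rˣ) * c) * unitDiag w * eta (d - (w⁻¹ : Rˣ) * b) := by
  have hinv : (w : R) * (w⁻¹ : Rˣ) = 1 := w.mul_inv
  simp only [unitDiag, eta, MonoidHom.coe_mk, OneHom.coe_mk, Matrix.mul_fin_two]
  congrm !![?_, ?_; ?_, ?_]
  · linear_combination (a * b + c * d - (w⁻¹ : Rˣ) * b * c - 1) * hinv + (-a * d + (w⁻¹ : Rˣ)) * hw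
  · linear_combination (-c) * hinv + a * hw
  · linear_combination b * hinv - d * hw
  · linear_combination hw

theorem prodEta_cons {n : ℕ} (a : R) (c : Fin n → R) :
    prodEta (Fin.cons a c : Fin (n + 1) → R) = eta a * prodEta c := by
  simp [prodEta, List.ofFn_succ]

/-- The number of walks of length `n` from `A` to `M` in which every step is a right
multiplication by some `η(a)` with `a ∈ I`. The starting point `A` is kept as a variable so that
walks can be cut at their first step. -/
noncomputable def etaWalkCount (I : Ideal R) (n : ℕ) (A M : Matrix (Fin 2) (Fin 2) R) : ℕ :=
  Nat.card {c : Fin n → I // A * prodEta (fun i => (c i : R)) = M}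

variable (I : Ideal R)

theorem etaWalkCount_mul_unitDiag_zero (u : Rˣ) (A M : Matrix (Fin 2) (Fin 2) R) :
    etaWalkCount I 0 (A * unitDiag u) M = etaWalkCount I 0 A (M * unitDiag u⁻¹) := by
  have hinv : unitDiag u * unitDiag u⁻¹ = 1 := by rw [← map_mul, mul_inv_cancel, map_one]
  have hinv' : unitDiag u⁻¹ * unitDiag u = 1 := by rw [← map_mul, inv_mul_cancel, map_one]
  refine Nat.card_congr (Equiv.subtypeEquivRight fun c => ?_)
  simp only [prodEta, List.ofFn_zero, List.prod_nil, mul_one]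
  constructor
  · rintro rfl
    rw [mul_assoc, hinv, mul_one]
  · rintro rfl
    rw [mul_assoc, hinv', mul_one]

theorem etaWalkCount_succ [Fintype I] (n : ℕ) (A M : Matrix (Fin 2) (Fin 2) R) :
    etaWalkCount I (n + 1) A M = ∑ a : I, etaWalkCount I n (A * eta (a : R)) M := by
  simp only [etaWalkCount]
  rw [← Nat.card_sigma]
  refine Nat.card_congr (Equiv.trans ?_ (Equiv.subtypeProdEquivSigmaSubtype
    fun (a : I) (c : Fin n → I) => A * eta (a : R) * prodEta (fun i => (c i : R)) = M))
  refine ((Fin.consEquiv fun _ => I).subtypeEquiv fun x => ?_).symm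
  have hcons : (fun i => ((Fin.consEquiv fun _ => I) x i : R)) =
      Fin.cons (x.1 : R) fun i => (x.2 i : R) := by
    ext i
    cases i using Fin.cases <;> rfl
  rw [hcons, prodEta_cons, mul_assoc]

theorem sum_units_mul [Fintype I] (u : Rˣ) (f : R → ℕ) : ∑ a : I, f (u * a) = ∑ a : I, f a :=
  Equiv.sum_comp (MulAction.toPerm u : Equiv.Perm I) fun a => f a

theorem sum_sub_of_mem [Fintype I] {x : R} (hx : x ∈ I) (f : R → ℕ) :
    ∑ a : I, f (a - x) = ∑ a : I, f a :=
  Equiv.sum_comp (Equiv.subRight (⟨x, hx⟩ : I)) fun a => f a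

-- Pushing `diag(u, u⁻¹)` past two letters multiplies them by `u²` and `u⁻²`, which permutes `I`.
theorem etaWalkCount_mul_unitDiag [Finite I] (k : ℕ) (u : Rˣ) (A M : Matrix (Fin 2) (Fin 2) R) :
    etaWalkCount I (2 * k) (A * unitDiag u) M =
      etaWalkCount I (2 * k) A (M * unitDiag u⁻¹) := by
  have := Fintype.ofFinite I
  induction k generalizing A with
  | zero => exact etaWalkCount_mul_unitDiag_zero I u A M
  | succ k ih =>
    have hpush (a b : R) : A * unitDiag u * eta a * eta b =
        A * eta ((u ^ 2 : Rˣ) * a) * eta ((u⁻¹ ^ 2 : Rˣ) * b) * unitDiag u := by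
      rw [mul_assoc A, unitDiag_mul_eta, ← mul_assoc, mul_assoc _ (unitDiag u⁻¹), unitDiag_mul_eta,
        inv_inv, ← mul_assoc]
    calc etaWalkCount I (2 * (k + 1)) (A * unitDiag u) M
        = ∑ a : I, ∑ b : I, etaWalkCount I (2 * k)
            (A * eta ((u ^ 2 : Rˣ) * (a : R)) * eta ((u⁻¹ ^ 2 : Rˣ) * (b : R)))
            (M * unitDiag u⁻¹) := by
          simp only [Nat.mul_succ, etaWalkCount_succ, hpush, ih]
      _ = ∑ a : I, ∑ b : I, etaWalkCount I (2 * k)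
            (A * eta (a : R) * eta (b : R)) (M * unitDiag u⁻¹) := by
          rw [sum_units_mul I (u ^ 2) fun a => ∑ b : I, etaWalkCount I (2 * k)
            (A * eta a * eta ((u⁻¹ ^ 2 : Rˣ) * (b : R))) (M * unitDiag u⁻¹)]
          exact Finset.sum_congr rfl fun a _ => sum_units_mul I (u⁻¹ ^ 2) fun b =>
            etaWalkCount I (2 * k) (A * eta (a : R) * eta b) (M * unitDiag u⁻¹)
      _ = etaWalkCount I (2 * (k + 1)) A (M * unitDiag u⁻¹) := by
          simp only [Nat.mul_succ, etaWalkCount_succ]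

theorem sum_etaWalkCount_four_letters [Fintype I] (k : ℕ) (b c : I) (w : Rˣ)
    (hw : (w : R) = b * c - 1) (A M : Matrix (Fin 2) (Fin 2) R) :
    ∑ a : I, ∑ d : I, etaWalkCount I (2 * k)
        (A * (eta (a : R) * eta (b : R) * eta (c : R) * eta (d : R))) M =
      etaWalkCount I (2 * (k + 1)) A (M * unitDiag w) := by
  have hword (a d : R) : A * (eta a * eta (b : R) * eta (c : R) * eta d) =
      A * eta (a - (w⁻¹ : Rˣ) * c) * eta ((w ^ 2 : Rˣ) * (d - (w⁻¹ : Rˣ) * b)) * unitDiag w⁻¹ := by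
    rw [eta_mul_eta_mul_eta_mul_eta a b c d w hw, mul_assoc _ (unitDiag w), unitDiag_mul_eta]
    simp only [mul_assoc]
  let f (a d : R) : ℕ := etaWalkCount I (2 * k) (A * eta a * eta d) (M * unitDiag w)
  calc _ = ∑ a : I, ∑ d : I, f (a - (w⁻¹ : Rˣ) * c) ((w ^ 2 : Rˣ) * (d - (w⁻¹ : Rˣ) * b)) := by
        simp only [hword, etaWalkCount_mul_unitDiag, inv_inv, f]
    _ = ∑ a : I, ∑ d : I, f a ((w ^ 2 : Rˣ) * (d - (w⁻¹ : Rˣ) * b)) := by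
        rw [sum_sub_of_mem I (I.mul_mem_left _ c.2)
          fun a => ∑ d : I, f a ((w ^ 2 : Rˣ) * (d - (w⁻¹ : Rˣ) * b))]
    _ = ∑ a : I, ∑ d : I, f a d := by
        refine Finset.sum_congr rfl fun a _ => ?_
        rw [sum_sub_of_mem I (I.mul_mem_left _ b.2) fun d => f a ((w ^ 2 : Rˣ) * d),
          sum_units_mul I (w ^ 2) (f a)]
    _ = _ := by simp only [Nat.mul_succ, etaWalkCount_succ, f]

theorem etaWalkCount_add_two [Fintype I] (k : ℕ) (w : I → I → Rˣ)
    (hw : ∀ b c, (w b c : R) = b * c - 1) (A M : Matrix (Fin 2) (Fin 2) R) :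
    etaWalkCount I (2 * (k + 2)) A M =
      ∑ b : I, ∑ c : I, etaWalkCount I (2 * (k + 1)) A (M * unitDiag (w b c)) := by
  calc etaWalkCount I (2 * (k + 2)) A M
      = ∑ a : I, ∑ b : I, ∑ c : I, ∑ d : I, etaWalkCount I (2 * k)
          (A * (eta (a : R) * eta (b : R) * eta (c : R) * eta (d : R))) M := by
        simp only [Nat.mul_add_one, etaWalkCount_succ, mul_assoc]
    _ = ∑ b : I, ∑ c : I, ∑ a : I, ∑ d : I, etaWalkCount I (2 * k)
          (A * (eta (a : R) * eta (b : R) * eta (c : R) * eta (d : R))) M := by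
        rw [Finset.sum_comm]
        exact Finset.sum_congr rfl fun b _ => Finset.sum_comm
    _ = _ := by simp only [sum_etaWalkCount_four_letters I k _ _ _ (hw _ _)]

end EtaWalks

section SigmaOffset

variable {R : Type*} [CommRing R]

/-- The cardinality of `σ_{z,n}` for `z = (-1)^(n/2) + y`, over an arbitrary ideal `I` of an
arbitrary ring. As in `sigmaCount`, `z⁻¹` is `Ring.inverse z`. -/
noncomputable def sigmaOffset (I : Ideal R) (n : ℕ) (y : R) : ℕ :=
  Nat.card {c : Fin n → R // (∀ i, c i ∈ I) ∧
    prodEta c = !![(-1) ^ (n / 2) + y, 0; 0, Ring.inverse ((-1) ^ (n / 2) + y)]}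

variable (I : Ideal R)

theorem sigmaOffset_eq_etaWalkCount (k : ℕ) (y : R) (z : Rˣ) (hz : (z : R) = (-1) ^ k + y) :
    sigmaOffset I (2 * k) y = etaWalkCount I (2 * k) 1 (unitDiag z) := by
  have hdiag : !![(-1) ^ (2 * k / 2) + y, 0; 0, Ring.inverse ((-1) ^ (2 * k / 2) + y)] =
      unitDiag z := by
    rw [Nat.mul_div_cancel_left k two_pos, ← hz, Ring.inverse_unit]
    rfl
  rw [sigmaOffset, etaWalkCount, hdiag]
  simp only [one_mul]
  refine Nat.card_congr ((Equiv.subtypeSubtypeEquivSubtypeInter _ _).symm.trans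
    (Equiv.subtypePiEquivPi.subtypeEquiv fun c => Iff.rfl))

theorem sigmaOffset_two_of_ne_zero {y : R} (hy : y ≠ 0) : sigmaOffset I 2 y = 0 := by
  refine Nat.card_eq_zero.2 (Or.inl ⟨fun ⟨c, _, hc⟩ => hy ?_⟩)
  have hdiag : c 0 * c 1 - 1 = -1 + y := by
    simpa [prodEta, eta, List.ofFn_succ, sub_eq_add_neg] using congrFun₂ hc 0 0
  have hc0 : c 0 = 0 := by
    simpa [prodEta, eta, List.ofFn_succ] using congrFun₂ hc 0 1
  simpa [hc0] using hdiag

variable {I}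

theorem exists_units_eq_neg_one_pow_add (hI : I ≤ Ideal.jacobson ⊥) (k : ℕ) {x : R} (hx : x ∈ I) :
    ∃ z : Rˣ, (z : R) = (-1) ^ k + x := by
  obtain ⟨v, hv⟩ := Ideal.mem_jacobson_bot.1 (hI hx) ((-1) ^ k)
  refine ⟨(-1) ^ k * v, ?_⟩
  have hsign : ((-1 : R) ^ k) * (-1) ^ k = 1 := by rw [← mul_pow]; simp
  push_cast
  linear_combination (-1) ^ k * hv + x * hsign

theorem sigmaOffset_add_two [Fintype I] (hI : I ≤ Ideal.jacobson ⊥) (k : ℕ) {y : R}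
    (hy : y ∈ I) :
    sigmaOffset I (2 * (k + 2)) y =
      ∑ b : I, ∑ c : I, sigmaOffset I (2 * (k + 1)) (b * c - y) := by
  obtain ⟨z, hz⟩ := exists_units_eq_neg_one_pow_add hI (k + 2) hy
  have hunit (b c : I) : ∃ w : Rˣ, (w : R) = b * c - 1 := by
    obtain ⟨w, hw⟩ := exists_units_eq_neg_one_pow_add hI 1 (I.mul_mem_left b c.2)
    exact ⟨w, by rw [hw]; ring⟩
  choose w hw using hunit
  have hfactor (b c : I) : ((z * w b c : Rˣ) : R) = (-1) ^ (k + 1) + (b * (z * c) - y) := by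
    rw [Units.val_mul, hw]
    linear_combination -hz
  calc sigmaOffset I (2 * (k + 2)) y
      = ∑ b : I, ∑ c : I, etaWalkCount I (2 * (k + 1)) 1 (unitDiag (z * w b c)) := by
        simp only [sigmaOffset_eq_etaWalkCount I _ y z hz, etaWalkCount_add_two I k w hw, map_mul]
    _ = ∑ b : I, ∑ c : I, sigmaOffset I (2 * (k + 1)) (b * (z * c) - y) := by
        simp only [sigmaOffset_eq_etaWalkCount I _ _ _ (hfactor _ _)]
    _ = ∑ b : I, ∑ c : I, sigmaOffset I (2 * (k + 1)) (b * c - y) :=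
        Finset.sum_congr rfl fun b _ =>
          sum_units_mul I z fun c => sigmaOffset I (2 * (k + 1)) (b * c - y)

theorem sigmaOffset_units_mul [Finite I] (hI : I ≤ Ideal.jacobson ⊥) (k : ℕ) {y : R}
    (hy : y ∈ I) (u : Rˣ) :
    sigmaOffset I (2 * (k + 1)) (u * y) = sigmaOffset I (2 * (k + 1)) y := by
  have := Fintype.ofFinite I
  induction k generalizing y with
  | zero =>
    rcases eq_or_ne y 0 with rfl | hy0
    · rw [mul_zero]
    · have huy : (u : R) * y ≠ 0 := u.mul_right_eq_zero.not.2 hy0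
      exact (sigmaOffset_two_of_ne_zero I huy).trans (sigmaOffset_two_of_ne_zero I hy0).symm
  | succ k ih =>
    rw [sigmaOffset_add_two hI k hy, sigmaOffset_add_two hI k (I.mul_mem_left _ hy)]
    refine Finset.sum_congr rfl fun b _ => ?_
    rw [← sum_units_mul I u fun c => sigmaOffset I (2 * (k + 1)) (b * c - u * y)]
    refine Finset.sum_congr rfl fun c _ => ?_
    rw [mul_left_comm, ← mul_sub, ih (I.sub_mem (I.mul_mem_left _ c.2) hy)]

end SigmaOffset

section TruncatedValuation

open Finset

variable {R : Type*} [CommRing R]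

/-- The `π`-adic valuation capped at `r`. When `π ^ r = 0`, the cap is attained exactly at `0`. -/
noncomputable def truncVal (π : R) (r : ℕ) (x : R) : ℕ :=
  (min (emultiplicity π x) r).toNat

variable {π : R} {r : ℕ}

theorem le_truncVal_iff {k : ℕ} {x : R} : k ≤ truncVal π r x ↔ k ≤ r ∧ π ^ k ∣ x := by
  have hne : min (emultiplicity π x) r ≠ ⊤ :=
    ne_top_of_le_ne_top (ENat.natCast_ne_top r) (min_le_right _ _)
  rw [truncVal, ← Nat.cast_le (α := ℕ∞), ENat.natCast_toNat hne, le_min_iff, Nat.cast_le,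
    pow_dvd_iff_le_emultiplicity, and_comm]

theorem truncVal_le (x : R) : truncVal π r x ≤ r :=
  (le_truncVal_iff.1 le_rfl).1

theorem pow_truncVal_dvd (x : R) : π ^ truncVal π r x ∣ x :=
  (le_truncVal_iff.1 le_rfl).2

theorem truncVal_mem_Icc_one_iff (hr : 1 ≤ r) {x : R} :
    truncVal π r x ∈ Icc 1 r ↔ x ∈ Ideal.span {π} := by
  rw [mem_Icc, and_iff_left (truncVal_le x), Ideal.mem_span_singleton, le_truncVal_iff,
    and_iff_right hr, pow_one]

theorem truncVal_units_mul (u : Rˣ) (x : R) : truncVal π r (u * x) = truncVal π r x :=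
  eq_of_forall_le_iff fun _ => by simp only [le_truncVal_iff, Units.dvd_mul_left]

theorem truncVal_sub_comm (x y : R) : truncVal π r (x - y) = truncVal π r (y - x) :=
  eq_of_forall_le_iff fun _ => by simp only [le_truncVal_iff, dvd_sub_comm]

theorem min_le_truncVal_sub (x y : R) :
    min (truncVal π r x) (truncVal π r y) ≤ truncVal π r (x - y) :=
  le_truncVal_iff.2 ⟨min_le_of_left_le (truncVal_le x),
    dvd_sub ((pow_dvd_pow π (min_le_left _ _)).trans (pow_truncVal_dvd x))
      ((pow_dvd_pow π (min_le_right _ _)).trans (pow_truncVal_dvd y))⟩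

theorem truncVal_sub_eq_left {x y : R} (hxy : truncVal π r x < truncVal π r y) :
    truncVal π r (x - y) = truncVal π r x := by
  have hle := min_le_truncVal_sub (π := π) (r := r) x y
  have hge := min_le_truncVal_sub (π := π) (r := r) y (y - x)
  rw [sub_sub_cancel, ← truncVal_sub_comm x y] at hge
  omega

theorem truncVal_sub_eq_right {x y : R} (hyx : truncVal π r y < truncVal π r x) :
    truncVal π r (x - y) = truncVal π r y := by
  rw [truncVal_sub_comm, truncVal_sub_eq_left hyx]

theorem truncVal_lt_truncVal_sub_iff {x y : R} :
    truncVal π r y < truncVal π r (x - y) ↔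
      truncVal π r x = truncVal π r y ∧ truncVal π r (x - y) ≠ truncVal π r y := by
  constructor
  · intro hlt
    rw [truncVal_sub_comm] at hlt
    have hx := truncVal_sub_eq_left hlt
    rw [sub_sub_cancel] at hx
    exact ⟨hx, by rw [truncVal_sub_comm]; exact hlt.ne'⟩
  · rintro ⟨hx, hne⟩
    have hle := min_le_truncVal_sub (π := π) (r := r) x y
    omega

theorem sum_span_singleton_eq [Fintype R] [Fintype (Ideal.span {π})] (hr : 1 ≤ r) (f : R → ℕ) :
    ∑ x : Ideal.span {π}, f x = ∑ x : R with truncVal π r x ∈ Icc 1 r, f x :=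
  (sum_subtype _
    (fun x => by rw [mem_filter_univ, truncVal_mem_Icc_one_iff hr]) f).symm

theorem sum_truncVal_mul_truncVal_sub_split [Fintype R] {y : R}
    (hy : truncVal π r y ∈ Icc 1 r) (M F : ℕ → ℕ) :
    ∑ x : R with truncVal π r x ∈ Icc 1 r, M (truncVal π r x) * F (truncVal π r (x - y)) =
      (∑ x : R with truncVal π r x ∈ Ico 1 (truncVal π r y),
        M (truncVal π r x) * F (truncVal π r x)) +
      (∑ x : R with truncVal π r x ∈ Icc (truncVal π r y + 1) r,
        M (truncVal π r x) * F (truncVal π r y)) +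
      (∑ x : R with truncVal π r x = truncVal π r y ∧ truncVal π r (x - y) = truncVal π r y,
        M (truncVal π r y) * F (truncVal π r y)) +
      ∑ x : R with truncVal π r (x - y) ∈ Icc (truncVal π r y + 1) r,
        M (truncVal π r y) * F (truncVal π r (x - y)) := by
  rw [mem_Icc] at hy
  simp only [sum_filter, ← sum_add_distrib, mem_Icc, mem_Ico]
  refine sum_congr rfl fun x _ => ?_
  have hle : truncVal π r x ≤ r := truncVal_le x
  have hsub_le : truncVal π r (x - y) ≤ r := truncVal_le (x - y)
  rcases lt_trichotomy (truncVal π r x) (truncVal π r y) with hlt | heq | hgt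
  · rw [truncVal_sub_eq_left hlt]
    split_ifs <;> omega
  · have hmin := min_le_truncVal_sub (π := π) (r := r) x y
    rw [heq, min_self] at hmin
    rw [heq]
    rcases hmin.eq_or_lt with heq' | hlt'
    · rw [← heq']
      split_ifs <;> omega
    · split_ifs <;> omega
  · rw [truncVal_sub_eq_right hgt]
    split_ifs <;> omega

end TruncatedValuation

theorem map_mulLeft_span_singleton {R : Type*} [CommRing R] (a b : R) :
    (Ideal.span {b}).toAddSubgroup.map (AddMonoidHom.mulLeft a) =
      (Ideal.span {a * b}).toAddSubgroup := by
  ext x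
  simp [Ideal.mem_span_singleton', mul_left_comm, eq_comm]

/-- `R` is a chain ring with uniformizer `π`, nilpotency index `r` and residue field of order `q`:
the non-multiples of `π` are units, `r` is the least exponent with `π ^ r = 0`, and
`|R / πR| = q`. The example behind the theorem is `R = ℤ/p^rℤ` with `π = p` and `q = p`. -/
structure IsChainRing {R : Type*} [CommRing R] (π : R) (q r : ℕ) : Prop where
  isUnit_of_not_dvd {x : R} : ¬ π ∣ x → IsUnit x
  pow_eq_zero_iff {k : ℕ} : π ^ k = 0 ↔ r ≤ k
  card_quotient : Nat.card (R ⧸ Ideal.span {π}) = q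

namespace IsChainRing

variable {R : Type*} [CommRing R] {π : R} {q r : ℕ}

theorem pow_dvd_pow_iff (h : IsChainRing π q r) {j k : ℕ} (hk : k ≤ r) : π ^ k ∣ π ^ j ↔ k ≤ j := by
  refine ⟨fun ⟨c, hc⟩ => ?_, pow_dvd_pow π⟩
  have hzero : π ^ (r - k + j) = 0 := by
    rw [pow_add, hc, ← mul_assoc, ← pow_add, Nat.sub_add_cancel hk, h.pow_eq_zero_iff.2 le_rfl,
      zero_mul]
  have := h.pow_eq_zero_iff.1 hzero
  omega

theorem truncVal_pow (h : IsChainRing π q r) (j : ℕ) : truncVal π r (π ^ j) = min r j :=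
  eq_of_forall_le_iff fun _ => by
    rw [le_truncVal_iff, le_min_iff]
    exact and_congr_right h.pow_dvd_pow_iff

theorem truncVal_eq_iff (h : IsChainRing π q r) {x : R} : truncVal π r x = r ↔ x = 0 := by
  rw [← (truncVal_le x).ge_iff_eq, le_truncVal_iff, h.pow_eq_zero_iff.2 le_rfl, zero_dvd_iff]
  exact and_iff_right le_rfl

theorem exists_eq_units_mul_pow (h : IsChainRing π q r) (x : R) :
    ∃ u : Rˣ, x = u * π ^ truncVal π r x := by
  rcases (truncVal_le x).eq_or_lt with hx | hx
  · refine ⟨1, ?_⟩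
    rw [hx, h.pow_eq_zero_iff.2 le_rfl, mul_zero, h.truncVal_eq_iff.1 hx]
  · obtain ⟨y, hy⟩ := pow_truncVal_dvd (π := π) (r := r) x
    have hndvd : ¬ π ∣ y := fun hdvd => by
      have hsucc : π ^ (truncVal π r x + 1) ∣ x := by
        rw [pow_succ]
        nth_rw 2 [hy]
        exact mul_dvd_mul_left _ hdvd
      exact (le_truncVal_iff.2 ⟨hx, hsucc⟩).not_gt (Nat.lt_succ_self _)
    obtain ⟨u, rfl⟩ := h.isUnit_of_not_dvd hndvd
    exact ⟨u, by rwa [mul_comm]⟩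

theorem truncVal_mul (h : IsChainRing π q r) (x y : R) :
    truncVal π r (x * y) = min r (truncVal π r x + truncVal π r y) := by
  obtain ⟨u, hu⟩ := h.exists_eq_units_mul_pow x
  obtain ⟨v, hv⟩ := h.exists_eq_units_mul_pow y
  have hxy : x * y = (u * v : Rˣ) * π ^ (truncVal π r x + truncVal π r y) := by
    rw [pow_add, Units.val_mul, ← mul_mul_mul_comm, ← hu, ← hv]
  rw [hxy, truncVal_units_mul, h.truncVal_pow]

theorem mul_eq_zero_iff (h : IsChainRing π q r) {x y : R} :
    x * y = 0 ↔ r ≤ truncVal π r x + truncVal π r y := by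
  rw [← h.truncVal_eq_iff, h.truncVal_mul, min_eq_left_iff]

theorem dvd_iff_truncVal_le (h : IsChainRing π q r) {x y : R} :
    x ∣ y ↔ truncVal π r x ≤ truncVal π r y := by
  obtain ⟨u, hu⟩ := h.exists_eq_units_mul_pow x
  obtain ⟨v, hv⟩ := h.exists_eq_units_mul_pow y
  rw [← h.pow_dvd_pow_iff (truncVal_le x), ← u.mul_left_dvd (a := π ^ truncVal π r x), ← hu,
    ← v.dvd_mul_left (b := π ^ truncVal π r y), ← hv]

theorem span_le_jacobson (h : IsChainRing π q r) : Ideal.span {π} ≤ Ideal.jacobson ⊥ := by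
  refine (Ideal.span_singleton_le_iff_mem _).2 (Ideal.mem_jacobson_bot.2 fun y => ?_)
  have hnil : IsNilpotent π := ⟨r, h.pow_eq_zero_iff.2 le_rfl⟩
  exact ((Commute.all π y).isNilpotent_mul_right hnil).isUnit_add_one

section LevelNumbers

open Finset

variable {q r k : ℕ}

theorem nF_mul_pow {j : ℕ} (hj : j < r) : nF q r j * q ^ j = q ^ r - q ^ (r - 1) := by
  rw [nF, if_neg hj.ne, Nat.sub_mul, ← pow_add, ← pow_add]
  congr 2 <;> omega

theorem sum_Ico_nF_mul_pow (hk : k ≤ r) :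
    ∑ j ∈ Ico 1 k, nF q r j * q ^ j = (q ^ r - q ^ (r - 1)) * (k - 1) := by
  rw [sum_congr rfl fun j hj => nF_mul_pow ((mem_Ico.1 hj).2.trans_le hk), sum_const,
    Nat.card_Ico, smul_eq_mul, mul_comm]

theorem muF_self (hq : 0 < q) (hr : 2 ≤ r) :
    muF q r r = (q ^ r - q ^ (r - 1)) * (r - 1) + q ^ (r - 1) := by
  obtain ⟨s, rfl⟩ := Nat.exists_eq_add_of_le' hr
  obtain ⟨d, hd⟩ := Nat.exists_eq_add_of_le (Nat.pow_le_pow_right hq (Nat.le_succ (s + 1)))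
  rw [muF, if_pos rfl, show s + 2 - 1 = s + 1 from rfl, Nat.add_sub_cancel, hd,
    Nat.add_sub_cancel_left]
  exact Nat.sub_eq_of_eq_add (by ring)

theorem sum_nF_mul_ite_eq_muF (hq : 0 < q) (hr : 2 ≤ r) (hk : k ∈ Icc 1 r) :
    ∑ j ∈ Icc 1 r, nF q r j *
      (if j < k then q ^ j else if j = r ∧ k = r then q ^ (r - 1) else 0) = muF q r k := by
  obtain ⟨hk1, hkr⟩ := mem_Icc.1 hk
  have hlast : nF q r r * (if r < k then q ^ r else if r = r ∧ k = r then q ^ (r - 1) else 0) =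
      if k = r then q ^ (r - 1) else 0 := by
    simp [nF, hkr.not_gt]
  have hinit : ∑ j ∈ Ico 1 r, nF q r j *
      (if j < k then q ^ j else if j = r ∧ k = r then q ^ (r - 1) else 0) =
        (q ^ r - q ^ (r - 1)) * (k - 1) := by
    rw [← sum_Ico_nF_mul_pow hkr, ← sum_subset (Ico_subset_Ico_right hkr)]
    · exact sum_congr rfl fun j hj => by rw [if_pos (mem_Ico.1 hj).2]
    · intro j hj hjk
      rw [mem_Ico] at hj hjk
      rw [if_neg (by omega), if_neg (by omega), mul_zero]
  rw [← Ico_insert_right (hk1.trans hkr), sum_insert right_notMem_Ico, hlast, hinit, add_comm]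
  split_ifs with hk
  · rw [hk, muF_self hq hr]
  · rw [muF, if_neg hk, add_zero]

end LevelNumbers

theorem relIndex_span_pow_succ (h : IsChainRing π q r) {k : ℕ} (hk : k < r) :
    (Ideal.span {π ^ (k + 1)}).toAddSubgroup.relIndex (Ideal.span {π ^ k}).toAddSubgroup = q := by
  have hker : (AddMonoidHom.mulLeft (π ^ k)).ker ≤ (Ideal.span {π}).toAddSubgroup := by
    intro x hx
    have hmul : π ^ k * x = 0 := hx
    rw [h.mul_eq_zero_iff, h.truncVal_pow, min_eq_right hk.le] at hmul
    exact (truncVal_mem_Icc_one_iff (by omega : 1 ≤ r)).1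
      (Finset.mem_Icc.2 ⟨by omega, truncVal_le x⟩)
  have hsucc := map_mulLeft_span_singleton (π ^ k) π
  have htop := map_mulLeft_span_singleton (π ^ k) 1
  rw [← pow_succ] at hsucc
  rw [Ideal.span_singleton_one, mul_one] at htop
  rw [← hsucc, ← htop, AddSubgroup.relIndex_map_map, sup_eq_left.2 hker,
    AddSubgroup.relIndex, Submodule.top_toAddSubgroup, top_sup_eq, ← AddSubgroup.relIndex,
    AddSubgroup.relIndex_top_right]
  exact h.card_quotient

theorem index_span_pow (h : IsChainRing π q r) {k : ℕ} (hk : k ≤ r) :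
    (Ideal.span {π ^ k}).toAddSubgroup.index = q ^ k := by
  induction k with
  | zero => simp
  | succ k ih =>
    have hle : Ideal.span {π ^ (k + 1)} ≤ Ideal.span {π ^ k} :=
      Ideal.span_singleton_le_span_singleton.2 (pow_dvd_pow π k.le_succ)
    rw [← AddSubgroup.relIndex_mul_index (K := (Ideal.span {π ^ k}).toAddSubgroup) hle,
      h.relIndex_span_pow_succ hk, ih (by omega), pow_succ']

theorem card_residue_pos [Finite R] (h : IsChainRing π q r) : 0 < q := by
  have : Finite (R ⧸ Ideal.span {π}) := Quotient.finite _
  exact h.card_quotient ▸ Nat.card_pos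

theorem two_le_card_residue [Finite R] (h : IsChainRing π q r) (hr : 1 ≤ r) : 2 ≤ q := by
  have : Finite (R ⧸ Ideal.span {π}) := Quotient.finite _
  have hone : ¬ π ∣ 1 := fun hdvd => by
    have := (h.pow_dvd_pow_iff (j := 0) hr).1 (by simpa using hdvd)
    omega
  have : Nontrivial (R ⧸ Ideal.span {π}) := Ideal.Quotient.nontrivial_iff.2 <|
    (Ideal.ne_top_iff_one _).2 (Ideal.mem_span_singleton.not.2 hone)
  exact h.card_quotient ▸ Finite.one_lt_card

theorem card_span_pow [Finite R] (h : IsChainRing π q r) {j : ℕ} (hj : j ≤ r) :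
    Nat.card (Ideal.span {π ^ j}) = q ^ (r - j) := by
  have hmul {k : ℕ} (hk : k ≤ r) : Nat.card (Ideal.span {π ^ k}) * q ^ k = Nat.card R := by
    rw [← h.index_span_pow hk]
    exact AddSubgroup.card_mul_index (Ideal.span {π ^ k}).toAddSubgroup
  have hcard : Nat.card R = q ^ r := by
    rw [← hmul le_rfl, h.pow_eq_zero_iff.2 le_rfl]
    simp
  refine Nat.eq_of_mul_eq_mul_right (pow_pos h.card_residue_pos j) ?_
  rw [hmul hj, hcard, ← pow_add, Nat.sub_add_cancel hj]

section LevelSums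

open Finset

variable [Fintype R]

theorem card_filter_le_truncVal (h : IsChainRing π q r) {j : ℕ} (hj : j ≤ r) :
    #{x : R | j ≤ truncVal π r x} = q ^ (r - j) := by
  rw [← h.card_span_pow hj]
  refine (Nat.subtype_card _ fun x => ?_).symm
  rw [mem_filter_univ, le_truncVal_iff, and_iff_right hj, ← Ideal.mem_span_singleton]

theorem card_filter_truncVal_eq (h : IsChainRing π q r) {j : ℕ} (hj : j ≤ r) :
    #{x : R | truncVal π r x = j} = nF q r j := by
  classical
  rcases hj.eq_or_lt with rfl | hlt
  · rw [nF, if_pos rfl]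
    exact card_eq_one.2 ⟨0, by ext x; simp [h.truncVal_eq_iff]⟩
  · have hsplit : #{x : R | j ≤ truncVal π r x} =
        #{x : R | truncVal π r x = j} + #{x : R | j + 1 ≤ truncVal π r x} := by
      rw [← card_union_of_disjoint (disjoint_filter.2 fun x _ hx => by omega), ← filter_or]
      exact congrArg card (filter_congr fun x _ => by omega)
    rw [h.card_filter_le_truncVal hj, h.card_filter_le_truncVal hlt] at hsplit
    rw [nF, if_neg hlt.ne, hsplit, Nat.sub_sub, Nat.add_sub_cancel]

theorem sum_filter_truncVal_mem (h : IsChainRing π q r) {s : Finset ℕ} (hs : ∀ j ∈ s, j ≤ r)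
    (f : ℕ → ℕ) :
    ∑ x : R with truncVal π r x ∈ s, f (truncVal π r x) = ∑ j ∈ s, nF q r j * f j := by
  rw [← sum_fiberwise_of_maps_to' (t := s) fun x hx => (mem_filter.1 hx).2]
  refine sum_congr rfl fun j hj => ?_
  rw [sum_const, smul_eq_mul, ← h.card_filter_truncVal_eq (hs j hj), filter_filter]
  congr 2
  exact filter_congr fun x _ => and_iff_right_of_imp fun hx => hx ▸ hj

theorem card_filter_mul_eq [DecidableEq R] (h : IsChainRing π q r) {b x : R}
    (hbx : truncVal π r b ≤ truncVal π r x) : #{c : R | b * c = x} = q ^ truncVal π r b := by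
  obtain ⟨c, hc⟩ := h.dvd_iff_truncVal_le.2 hbx
  have hfiber : #{c : R | b * c = x} = #{c : R | b * c = 0} :=
    AddMonoidHom.card_fiber_eq_of_mem_range (AddMonoidHom.mulLeft b) ⟨c, hc.symm⟩ ⟨0, mul_zero b⟩
  have hann : #{c : R | b * c = 0} = #{c : R | r - truncVal π r b ≤ truncVal π r c} :=
    congrArg card (filter_congr fun c _ => by rw [h.mul_eq_zero_iff, Nat.sub_le_iff_le_add'])
  rw [hfiber, hann, h.card_filter_le_truncVal (Nat.sub_le _ _), Nat.sub_sub_self (truncVal_le b)]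

theorem card_filter_truncVal_mem_and_mul_eq [DecidableEq R] (h : IsChainRing π q r) (hr : 1 ≤ r)
    (b x : R) :
    #{c : R | truncVal π r c ∈ Icc 1 r ∧ b * c = x} =
      if truncVal π r b < truncVal π r x then q ^ truncVal π r b
      else if truncVal π r b = r ∧ truncVal π r x = r then q ^ (r - 1) else 0 := by
  have hmul (c : R) := h.truncVal_mul b c
  have hle (c : R) : truncVal π r c ≤ r := truncVal_le c
  split_ifs with hlt hzero
  · rw [← h.card_filter_mul_eq hlt.le]
    refine congrArg card (filter_congr fun c _ => and_iff_right_of_imp ?_)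
    rintro rfl
    have := hmul c
    exact mem_Icc.2 ⟨by omega, hle c⟩
  · rw [← h.card_filter_le_truncVal hr, h.truncVal_eq_iff.1 hzero.1, h.truncVal_eq_iff.1 hzero.2]
    exact congrArg card (filter_congr fun c _ => by simp [hle c])
  · refine card_eq_zero.2 (filter_eq_empty_iff.2 ?_)
    rintro c - ⟨hc, rfl⟩
    have := hmul c
    have := hle b
    have := (mem_Icc.1 hc).1
    omega

theorem sum_card_filter_mul_eq [DecidableEq R] (h : IsChainRing π q r) (hr : 2 ≤ r) {x : R}
    (hx : truncVal π r x ∈ Icc 1 r) :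
    ∑ b : R with truncVal π r b ∈ Icc 1 r, #{c : R | truncVal π r c ∈ Icc 1 r ∧ b * c = x} =
      muF q r (truncVal π r x) := by
  simp only [h.card_filter_truncVal_mem_and_mul_eq (one_le_two.trans hr)]
  rw [h.sum_filter_truncVal_mem (fun j hj => (mem_Icc.1 hj).2) fun j =>
      if j < truncVal π r x then q ^ j
      else if j = r ∧ truncVal π r x = r then q ^ (r - 1) else 0,
    sum_nF_mul_ite_eq_muF h.card_residue_pos hr hx]

theorem sum_sum_mul_eq_sum_muF_mul (h : IsChainRing π q r) (hr : 2 ≤ r) (f : R → ℕ) :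
    ∑ b : R with truncVal π r b ∈ Icc 1 r, ∑ c : R with truncVal π r c ∈ Icc 1 r, f (b * c) =
      ∑ x : R with truncVal π r x ∈ Icc 1 r, muF q r (truncVal π r x) * f x := by
  classical
  have hinner (b : R) : ∑ c : R with truncVal π r c ∈ Icc 1 r, f (b * c) =
      ∑ x : R with truncVal π r x ∈ Icc 1 r,
        #{c : R | truncVal π r c ∈ Icc 1 r ∧ b * c = x} * f x := by
    have hmaps (c : R) (hc : c ∈ univ.filter fun c : R => truncVal π r c ∈ Icc 1 r) :
        b * c ∈ univ.filter fun x : R => truncVal π r x ∈ Icc 1 r := by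
      rw [mem_filter_univ, truncVal_mem_Icc_one_iff (one_le_two.trans hr)] at hc ⊢
      exact Ideal.mul_mem_left _ b hc
    rw [← sum_fiberwise_of_maps_to' hmaps]
    simp only [sum_const, filter_filter, smul_eq_mul]
  simp only [hinner]
  rw [sum_comm]
  exact sum_congr rfl fun x hx => by
    rw [← sum_mul, h.sum_card_filter_mul_eq hr ((mem_filter_univ x).1 hx)]

theorem card_filter_truncVal_lt_truncVal_sub (h : IsChainRing π q r) {y : R}
    (hy : truncVal π r y < r) :
    #{x : R | truncVal π r y < truncVal π r (x - y)} = q ^ (r - truncVal π r y - 1) := by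
  rw [Nat.sub_sub, ← h.card_filter_le_truncVal hy]
  exact card_equiv (Equiv.subRight y) fun x => by simp

theorem card_filter_truncVal_eq_and_truncVal_sub_eq (h : IsChainRing π q r) {y : R}
    (hy : truncVal π r y < r) :
    #{x : R | truncVal π r x = truncVal π r y ∧ truncVal π r (x - y) = truncVal π r y} =
      (q - 2) * q ^ (r - truncVal π r y - 1) := by
  have hlevel := h.card_filter_truncVal_eq hy.le
  have hnear := h.card_filter_truncVal_lt_truncVal_sub hy
  simp only [truncVal_lt_truncVal_sub_iff] at hnear
  rw [← card_filter_add_card_filter_not fun x => truncVal π r (x - y) = truncVal π r y,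
    filter_filter, filter_filter, hnear, nF, if_neg hy.ne] at hlevel
  obtain ⟨s, hs⟩ : ∃ s, r - truncVal π r y = s + 1 := ⟨r - truncVal π r y - 1, by omega⟩
  obtain ⟨d, rfl⟩ := Nat.exists_eq_add_of_le' (h.two_le_card_residue (by omega))
  rw [hs, Nat.add_sub_cancel] at hlevel ⊢
  rw [Nat.add_sub_cancel]
  have hpow : (d + 2) ^ (s + 1) = d * (d + 2) ^ s + (d + 2) ^ s + (d + 2) ^ s := by ring
  omega

theorem sum_filter_truncVal_sub_mem (h : IsChainRing π q r) (y : R) {s : Finset ℕ}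
    (hs : ∀ j ∈ s, j ≤ r) (f : ℕ → ℕ) :
    ∑ x : R with truncVal π r (x - y) ∈ s, f (truncVal π r (x - y)) = ∑ j ∈ s, nF q r j * f j := by
  rw [← h.sum_filter_truncVal_mem hs]
  exact sum_equiv (Equiv.subRight y) (by simp) (by simp)

theorem sum_truncVal_mul_truncVal_sub (h : IsChainRing π q r) {y : R} (hy : 1 ≤ truncVal π r y)
    (hyr : truncVal π r y < r) (M F : ℕ → ℕ) :
    ∑ x : R with truncVal π r x ∈ Icc 1 r, M (truncVal π r x) * F (truncVal π r (x - y)) =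
      (∑ j ∈ Ico 1 (truncVal π r y), nF q r j * F j * M j) +
      (∑ j ∈ Icc (truncVal π r y + 1) r, nF q r j * F j * M (truncVal π r y)) +
      F (truncVal π r y) * (M (truncVal π r y) * (q - 2) * q ^ (r - truncVal π r y - 1) +
        ∑ j ∈ Icc (truncVal π r y + 1) r, nF q r j * M j) := by
  have hIco (j : ℕ) (hj : j ∈ Ico 1 (truncVal π r y)) : j ≤ r := (mem_Ico.1 hj).2.le.trans hyr.le
  have hIcc (j : ℕ) (hj : j ∈ Icc (truncVal π r y + 1) r) : j ≤ r := (mem_Icc.1 hj).2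
  rw [sum_truncVal_mul_truncVal_sub_split (mem_Icc.2 ⟨hy, hyr.le⟩) M F,
    h.sum_filter_truncVal_mem hIco fun j => M j * F j,
    h.sum_filter_truncVal_mem hIcc fun j => M j * F (truncVal π r y),
    h.sum_filter_truncVal_sub_mem y hIcc fun j => M (truncVal π r y) * F j,
    sum_const, h.card_filter_truncVal_eq_and_truncVal_sub_eq hyr, smul_eq_mul]
  simp only [mul_add, mul_sum, mul_assoc, mul_left_comm, mul_comm]
  ring

end LevelSums

end IsChainRing

/-- The number `σ_n(ℓ)` of `sigmaCount` for a general ring with `π` in the role of `p`: the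
cardinality of `σ_{z,n}` for the ideal `πR` and `z = (-1)^(n/2) + π^ℓ`. -/
noncomputable def chainSigma {R : Type*} [CommRing R] (π : R) (n ℓ : ℕ) : ℕ :=
  sigmaOffset (Ideal.span {π}) n (π ^ ℓ)

namespace IsChainRing

open Finset

variable {R : Type*} [CommRing R] {π : R} {q r : ℕ}

theorem sigmaOffset_eq_chainSigma [Finite R] (h : IsChainRing π q r) (k : ℕ) {x : R}
    (hx : x ∈ Ideal.span {π}) :
    sigmaOffset (Ideal.span {π}) (2 * (k + 1)) x =
      chainSigma π (2 * (k + 1)) (truncVal π r x) := by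
  obtain ⟨u, hu⟩ := h.exists_eq_units_mul_pow x
  have hpow : π ^ truncVal π r x ∈ Ideal.span {π} := by
    rw [hu] at hx
    exact (Ideal.unit_mul_mem_iff_mem _ u.isUnit).1 hx
  conv_lhs => rw [hu]
  exact sigmaOffset_units_mul h.span_le_jacobson k hpow u

theorem chainSigma_add_two [Fintype R] (h : IsChainRing π q r) (hr : 2 ≤ r) (k : ℕ) {y : R}
    (hy : y ∈ Ideal.span {π}) :
    chainSigma π (2 * (k + 2)) (truncVal π r y) =
      ∑ x : R with truncVal π r x ∈ Icc 1 r,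
        muF q r (truncVal π r x) * chainSigma π (2 * (k + 1)) (truncVal π r (x - y)) := by
  have := Fintype.ofFinite (Ideal.span {π})
  have hr1 : 1 ≤ r := one_le_two.trans hr
  let f (x : R) : ℕ := sigmaOffset (Ideal.span {π}) (2 * (k + 1)) (x - y)
  calc chainSigma π (2 * (k + 2)) (truncVal π r y)
      = ∑ b : Ideal.span {π}, ∑ c : Ideal.span {π}, f (b * c) := by
        rw [← h.sigmaOffset_eq_chainSigma (k + 1) hy,
          sigmaOffset_add_two h.span_le_jacobson k hy]
    _ = ∑ b : R with truncVal π r b ∈ Icc 1 r, ∑ c : R with truncVal π r c ∈ Icc 1 r,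
          f (b * c) := by
        rw [← sum_span_singleton_eq hr1 fun b => ∑ c : R with truncVal π r c ∈ Icc 1 r, f (b * c)]
        exact sum_congr rfl fun b _ => sum_span_singleton_eq hr1 fun c => f (b * c)
    _ = ∑ x : R with truncVal π r x ∈ Icc 1 r, muF q r (truncVal π r x) * f x :=
        h.sum_sum_mul_eq_sum_muF_mul hr f
    _ = _ := by
        refine sum_congr rfl fun x hx => ?_
        rw [mem_filter_univ, truncVal_mem_Icc_one_iff hr1] at hx
        exact congrArg _ (h.sigmaOffset_eq_chainSigma k (Ideal.sub_mem _ hx hy))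

theorem chainSigma_add_two_of_lt [Finite R] (h : IsChainRing π q r) (hr : 2 ≤ r) (k : ℕ) {ℓ : ℕ}
    (hℓ : 1 ≤ ℓ) (hℓr : ℓ < r) :
    chainSigma π (2 * (k + 2)) ℓ =
      (∑ j ∈ Ico 1 ℓ, nF q r j * chainSigma π (2 * (k + 1)) j * muF q r j) +
      (∑ j ∈ Icc (ℓ + 1) r, nF q r j * chainSigma π (2 * (k + 1)) j * muF q r ℓ) +
      chainSigma π (2 * (k + 1)) ℓ * (muF q r ℓ * (q - 2) * q ^ (r - ℓ - 1) +
        ∑ j ∈ Icc (ℓ + 1) r, nF q r j * muF q r j) := by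
  have := Fintype.ofFinite R
  have hval : truncVal π r (π ^ ℓ) = ℓ := (h.truncVal_pow ℓ).trans (min_eq_right hℓr.le)
  have hmem : π ^ ℓ ∈ Ideal.span {π} := Ideal.mem_span_singleton.2 (dvd_pow_self π (by omega))
  have hrec := h.chainSigma_add_two hr k hmem
  rw [h.sum_truncVal_mul_truncVal_sub (hval.symm ▸ hℓ) (hval.symm ▸ hℓr), hval] at hrec
  exact hrec

theorem chainSigma_add_two_self [Finite R] (h : IsChainRing π q r) (hr : 2 ≤ r) (k : ℕ) :
    chainSigma π (2 * (k + 2)) r =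
      ∑ j ∈ Icc 1 r, nF q r j * chainSigma π (2 * (k + 1)) j * muF q r j := by
  have := Fintype.ofFinite R
  have hrec := h.chainSigma_add_two hr k (Ideal.zero_mem _)
  simp only [sub_zero, h.truncVal_eq_iff.2] at hrec
  rw [hrec, h.sum_filter_truncVal_mem (fun j hj => (mem_Icc.1 hj).2) fun j =>
    muF q r j * chainSigma π (2 * (k + 1)) j]
  exact sum_congr rfl fun j _ => by ring

end IsChainRing

theorem ker_zmodCastHom {m n : ℕ} (hmn : m ∣ n) :
    RingHom.ker (ZMod.castHom hmn (ZMod m)) = Ideal.span {(m : ZMod n)} := by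
  refine le_antisymm (fun x hx => ?_) ((Ideal.span_singleton_le_iff_mem _).2 (by simp))
  obtain ⟨a, rfl⟩ := ZMod.intCast_surjective x
  rw [RingHom.mem_ker, map_intCast, ZMod.intCast_zmod_eq_zero_iff_dvd] at hx
  rw [Ideal.mem_span_singleton]
  simpa using map_dvd (Int.castRingHom (ZMod n)) hx

theorem isChainRing_zmod_prime_pow {p r : ℕ} (hp : p.Prime) (hr : 0 < r) :
    IsChainRing (p : ZMod (p ^ r)) p r where
  isUnit_of_not_dvd {x} hx := by
    have : NeZero (p ^ r) := ⟨pow_ne_zero r hp.ne_zero⟩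
    obtain ⟨m, rfl⟩ := ZMod.natCast_zmod_surjective x
    exact (ZMod.isUnit_natCast_iff_not_dvd_pow hp hr).2 fun hm => hx (Nat.cast_dvd_cast hm)
  pow_eq_zero_iff {k} := by
    rw [← Nat.cast_pow, ZMod.natCast_eq_zero_iff, Nat.pow_dvd_pow_iff_le_right hp.one_lt]
  card_quotient := by
    have hdvd : p ∣ p ^ r := dvd_pow_self p hr.ne'
    rw [← ker_zmodCastHom hdvd, Nat.card_congr (RingHom.quotientKerEquivOfSurjective
      (ZMod.castHom_surjective hdvd)).toEquiv, Nat.card_zmod]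

theorem stmt11_general {R : Type*} [CommRing R] [Finite R] {π : R} {q r : ℕ}
    (h : IsChainRing π q r) (hr : 2 ≤ r) (n : ℕ) (hn : 4 ≤ n) (hne : Even n) :
    (∀ ℓ, 1 ≤ ℓ → ℓ ≤ r - 1 →
      chainSigma π n ℓ =
        (∑ j ∈ Finset.Ico 1 ℓ, nF q r j * chainSigma π (n - 2) j * muF q r j) +
        (∑ j ∈ Finset.Icc (ℓ + 1) r, nF q r j * chainSigma π (n - 2) j * muF q r ℓ) +
        chainSigma π (n - 2) ℓ *
          (muF q r ℓ * (q - 2) * q ^ (r - ℓ - 1) +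
            ∑ j ∈ Finset.Icc (ℓ + 1) r, nF q r j * muF q r j)) ∧
    chainSigma π n r =
      ∑ j ∈ Finset.Icc 1 r, nF q r j * chainSigma π (n - 2) j * muF q r j := by
  obtain ⟨m, rfl⟩ := hne.two_dvd
  obtain ⟨k, rfl⟩ := Nat.exists_eq_add_of_le' (show 2 ≤ m by omega)
  rw [show 2 * (k + 2) - 2 = 2 * (k + 1) by omega]
  exact ⟨fun ℓ hℓ hℓr => h.chainSigma_add_two_of_lt hr k hℓ (by omega),
    h.chainSigma_add_two_self hr k⟩

/-- The recursion for the numbers `σ_n(ℓ)`. -/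
theorem stmt11 (p r : ℕ) (hp : p.Prime) (hr : 2 ≤ r) (n : ℕ) (hn : 4 ≤ n) (hne : Even n) :
    (∀ ℓ, 1 ≤ ℓ → ℓ ≤ r - 1 →
      sigmaCount p r n ℓ =
        (∑ j ∈ Finset.Ico 1 ℓ, nF p r j * sigmaCount p r (n - 2) j * muF p r j) +
        (∑ j ∈ Finset.Icc (ℓ + 1) r, nF p r j * sigmaCount p r (n - 2) j * muF p r ℓ) +
        sigmaCount p r (n - 2) ℓ *
          (muF p r ℓ * (p - 2) * p ^ (r - ℓ - 1) +
            ∑ j ∈ Finset.Icc (ℓ + 1) r, nF p r j * muF p r j)) ∧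
    sigmaCount p r n r =
      ∑ j ∈ Finset.Icc 1 r, nF p r j * sigmaCount p r (n - 2) j * muF p r j := by
  have : NeZero (p ^ r) := ⟨pow_ne_zero r hp.ne_zero⟩
  exact stmt11_general (isChainRing_zmod_prime_pow hp (by omega)) hr n hn hne
end
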